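/- Let (F^1,…,F^N) be a vector potential of a conformal flat F-manifold on a simply connected open neighbourhood M of a point of ℂ^N, with Euler vector field E and Q := diag(q^1,…,q^N). Then there exist a calibration Ω^d_0 (d ≥ −1) of the flat F-manifold and complex N×N matrices R_n (n ≥ 1) with [Q,R_n] = n R_n such that E^θ ∂Ω^d_0/∂t^θ = (d+1)Ω^d_0 + [Ω^d_0, Q] + Σ_{i=1}^{d+1} (−1)^{i−1} R_i Ω^{d−i}_0 for all d ≥ −1. -/

import Mathlib

/-!
The functions `Ω^d_0` and the matrices `R_{d+1}` are built together, by induction on `d`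
(`exists_next`, fed into the recursion principle `exists_seq_of_step`). Let `C_γ = (c^α_{γβ})` be the
matrices of structure constants.

*Existence of a primitive.* The recursion for a calibration reads
`∂_γ Ω^d_0 = Ω^{d-1}_0 C_γ`. The form `Ω^{d-1}_0 C_γ dt^γ` is closed: `∂_γ C_δ = ∂_δ C_γ` because
`C_γ` consists of second derivatives of `F`, and `C_γ C_δ = C_δ C_γ` by the associativity equations.
On the simply connected set `M` it is therefore exact (`exists_pd_primitive`). Local primitives
come from the Poincaré lemma on balls; they are glued in `exists_global` by lifting the identity of
`M` to the covering space of germs of primitives. A primitive of an analytic form is analytic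
(`analyticAt_of_hasFDerivAt_analyticAt`), by integrating power series along rays.

*Homogeneity.* Differentiating the conformality condition twice gives
`E C_γ = q^γ C_γ + [C_γ, Q]` (`eM_structure`). Together with `[∂_γ, E] = (1 - q^γ) ∂_γ` and the
homogeneity of `Ω^{d-1}_0`, this shows that for any primitive `Ω'` the defect
`D = E Ω' - (d+1) Ω' - [Ω', Q] - ∑_{i=1}^{d} (-1)^{i-1} R_i Ω^{d-i}_0`
has vanishing derivatives, hence is a constant matrix. Replacing `Ω'` by `Ω' + K` with `K` constant
subtracts `(d + 1 + q^β - q^α) K^α_β` from the entry `D^α_β`. So every entry of `D` with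
`q^α - q^β ≠ d + 1` can be removed, and what remains is `(-1)^d R_{d+1}` for a matrix `R_{d+1}`
supported on the entries with `q^α - q^β = d + 1`, which says that `[Q, R_{d+1}] = (d+1) R_{d+1}`.
-/

/-!
STATEMENT 1: For a vector potential `(F^1,…,F^N)` of a conformal flat F-manifold on a
simply connected open neighbourhood `M` of a point of ℂ^N, with Euler vector field `E`
and `Q = diag(q^1,…,q^N)`, there exist a calibration `Ω^d_0` (d ≥ −1) and matrices `R_n`
(n ≥ 1) with `[Q,R_n] = nR_n` such that
`E^θ ∂Ω^d_0/∂t^θ = (d+1)Ω^d_0 + [Ω^d_0,Q] + Σ_{i=1}^{d+1}(−1)^{i−1} R_i Ω^{d−i}_0`.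
-/

noncomputable section

abbrev Pt (n : ℕ) := Fin n → ℂ
abbrev Fn (n : ℕ) := (Fin n → ℂ) → ℂ

noncomputable def pd {n : ℕ} (i : Fin n) (f : Fn n) : Fn n :=
  fun x => fderiv ℂ f x (Pi.single i 1)

section

open scoped Topology ENNReal

/-! ### Primitives of analytic forms -/

/-- A function whose differential is an analytic form `ω` near `a` is analytic at `a`: on the ray
`t ↦ a + t • y` the power series of `ω` at `a` may be integrated term by term, and the degree `k`
term `t ^ k * p k (y, …, y) y` integrates to `(k + 1)⁻¹ * p k (y, …, y) y`. -/
theorem analyticAt_of_hasFDerivAt_analyticAt {n : ℕ} {f : Fn n} {ω : Pt n → Pt n →L[ℂ] ℂ}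
    {a : Pt n} (hω : AnalyticAt ℂ ω a) (hf : ∀ᶠ x in 𝓝 a, HasFDerivAt f (ω x) x) :
    AnalyticAt ℂ f a := by
  obtain ⟨p, s, hps⟩ := hω
  obtain ⟨ε, hε, hfε⟩ := EMetric.mem_nhds_iff.1 hf
  set r := min s ε with hr
  have hr0 : 0 < r := lt_min hps.r_pos hε
  have hp := hps.mono hr0 (min_le_left _ _)
  -- Dividing the degree `k` part of `y ↦ ω (a + y) y` by `k` is radial integration; in degree `0`
  -- the junk value `0⁻¹ = 0` is harmless because that part vanishes.
  set P : FormalMultilinearSeries ℂ (Pt n) ℂ := fun k =>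
    (k : ℂ)⁻¹ • (p.unshift 0) k with hP
  have hPr : r ≤ P.radius := by
    refine hp.r_le.trans ?_
    rw [← p.radius_unshift 0]
    refine FormalMultilinearSeries.radius_le_of_le (fun k => ?_)
    rw [hP]
    simp only [norm_smul, norm_inv, Complex.norm_natCast]
    rcases Nat.eq_zero_or_pos k with rfl | hk
    · simp
    · exact mul_le_of_le_one_left (norm_nonneg _) (inv_le_one_of_one_le₀ (by exact_mod_cast hk))
  have main : HasFPowerSeriesOnBall (fun x => f x - f a) P a r := by
    refine ⟨hPr, hr0, fun {y} hy => ?_⟩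
    have hyp : y ∈ Metric.eball (0 : Pt n) p.radius := Metric.eball_subset_eball hp.r_le hy
    have hball : ∀ t : ℝ, t ∈ Set.Icc (0:ℝ) 1 → t • y ∈ Metric.eball (0 : Pt n) r := by
      intro t ht
      rw [mem_eball_zero_iff, enorm_smul] at *
      refine lt_of_le_of_lt (mul_le_of_le_one_left' ?_) hy
      rw [Real.enorm_eq_ofReal ht.1]
      exact ENNReal.ofReal_le_one.2 ht.2
    have hderiv : ∀ t ∈ Set.Icc (0:ℝ) 1,
        HasDerivAt (fun t : ℝ => f (a + t • y)) (ω (a + t • y) y) t := by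
      intro t ht
      have h1 : HasFDerivAt f (ω (a + t • y)) (a + t • y) := by
        apply hfε
        have := hball t ht
        rw [mem_eball_zero_iff] at this
        rw [Metric.mem_eball, edist_eq_enorm_sub]
        simpa using lt_of_lt_of_le this (min_le_right _ _)
      have h2 : HasDerivAt (fun t : ℝ => a + t • y) y t := by
        simpa using ((hasDerivAt_id t).smul_const y).const_add a
      exact (h1.restrictScalars ℝ).comp_hasDerivAt t h2
    set c : ℕ → ℂ := fun k => (p k (fun _ => y)) y with hc
    have hsum : Summable fun k => ‖c k‖ := by
      have := (p.summable_norm_apply hyp).mul_right ‖y‖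
      exact this.of_nonneg_of_le (fun _ => norm_nonneg _)
        (fun k => ContinuousLinearMap.le_opNorm _ _)
    have hω' : ∀ t ∈ Set.Icc (0:ℝ) 1, HasSum (fun k => (t:ℂ)^k * c k) (ω (a + t • y) y) := by
      intro t ht
      have := (hp.hasSum (hball t ht)).mapL (ContinuousLinearMap.apply ℂ ℂ y)
      convert! this using 2 with k
      have : (fun _ : Fin k => t • y) = fun i : Fin k =>
          ((fun _ : Fin k => (t:ℂ)) i) • ((fun _ : Fin k => y) i) := by
        ext; simp
      rw [this, (p k).map_smul_univ]
      simp [hc]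
    have hint : HasSum (fun k => ∫ t in (0:ℝ)..1, (t:ℂ)^k * c k)
        (∫ t in (0:ℝ)..1, ω (a + t • y) y) := by
      refine intervalIntegral.hasSum_integral_of_dominated_convergence (fun k _ => ‖c k‖)
        (fun k => ?_) (fun k => ?_) ?_ (by simp) ?_
      · exact (by fun_prop : Continuous fun t : ℝ => (t:ℂ)^k * c k).aestronglyMeasurable
      · refine Filter.Eventually.of_forall fun t ht => ?_
        rw [Set.uIoc_of_le zero_le_one] at ht
        rw [norm_mul, norm_pow, Complex.norm_real, Real.norm_of_nonneg ht.1.le]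
        exact mul_le_of_le_one_left (norm_nonneg _) (pow_le_one₀ ht.1.le ht.2)
      · exact Filter.Eventually.of_forall fun t _ => hsum
      · refine Filter.Eventually.of_forall fun t ht => ?_
        rw [Set.uIoc_of_le zero_le_one] at ht
        exact hω' t ⟨ht.1.le, ht.2⟩
    have hftc : (∫ t in (0:ℝ)..1, ω (a + t • y) y) = f (a + y) - f a := by
      have := intervalIntegral.integral_eq_sub_of_hasDerivAt
        (f := fun t : ℝ => f (a + t • y)) (f' := fun t : ℝ => ω (a + t • y) y)
        (a := 0) (b := 1) (fun t ht => hderiv t (by rwa [Set.uIcc_of_le zero_le_one] at ht)) ?_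
      · simpa using this
      · refine ContinuousOn.intervalIntegrable fun t ht => ?_
        rw [Set.uIcc_of_le zero_le_one] at ht
        have hb := hball t ht
        have h1 : ContinuousAt ω (a + t • y) := by
          refine hp.continuousOn.continuousAt (Metric.isOpen_eball.mem_nhds ?_)
          rw [Metric.mem_eball, edist_eq_enorm_sub]
          rw [mem_eball_zero_iff] at hb
          simpa using hb
        have h2 : ContinuousAt (fun t : ℝ => ω (a + t • y)) t :=
          ContinuousAt.comp (f := fun t : ℝ => a + t • y) h1 (by fun_prop)
        exact (h2.clm_apply continuousAt_const).continuousWithinAt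
    rw [hftc] at hint
    rw [← hasSum_nat_add_iff' 1]
    convert! hint using 1
    · funext k
      have e1 : (fun t : ℝ => (t:ℂ)^k * c k) = fun t : ℝ => ((t^k : ℝ) : ℂ) * c k := by
        funext t; push_cast; rfl
      rw [e1, intervalIntegral.integral_mul_const, intervalIntegral.integral_ofReal, integral_pow]
      simp [hP, FormalMultilinearSeries.unshift, hc]
      exact Or.inl rfl
    · simp [hP]
  have := main.analyticAt.add (analyticAt_const (v := f a))
  refine this.congr (Filter.Eventually.of_forall fun x => ?_)
  simp

/-- Poincaré lemma on balls, with complex differentials. -/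
theorem exists_local {n : ℕ} {M : Set (Pt n)} (hM : IsOpen M) {ω : Pt n → Pt n →L[ℂ] ℂ}
    (hω : DifferentiableOn ℂ ω M) (hsymm : ∀ x ∈ M, ∀ u v, fderiv ℂ ω x u v = fderiv ℂ ω x v u)
    {x : Pt n} (hx : x ∈ M) : ∃ r > 0, Metric.ball x r ⊆ M ∧ ∃ f : Fn n,
      ∀ y ∈ Metric.ball x r, HasFDerivAt f (ω y) y := by
  obtain ⟨r, hr, hsub⟩ := Metric.isOpen_iff.1 hM x hx
  refine ⟨r, hr, hsub, ?_⟩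
  have h1 : ∀ y ∈ Metric.ball x r, DifferentiableAt ℂ ω y := fun y hy =>
    hω.differentiableAt (hM.mem_nhds (hsub hy))
  refine (convex_ball x r).exists_forall_hasFDerivAt_of_fderiv_symmetric (𝕜 := ℂ) Metric.isOpen_ball
    (fun y hy => ((h1 y hy).restrictScalars ℝ).differentiableWithinAt) ?_
  intro y hy u v
  rw [(h1 y hy).fderiv_restrictScalars ℝ]
  exact hsymm y (hsub hy) u v

/-- The set `ℂ` with the discrete topology: the fibre of the covering space of germs of primitives
of a closed form, two primitives on a connected set differing by a constant. -/
def DiscC : Type := ℂ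
instance : TopologicalSpace DiscC := ⊥
instance : DiscreteTopology DiscC := ⟨rfl⟩

/-- The identity map from the discrete copy of `ℂ` to `ℂ`. -/
def DiscC.toC : DiscC ≃ ℂ := Equiv.refl ℂ

/-- On a simply connected domain, local primitives of a form `ω` glue to a global one. If `g i` is
the chosen primitive on a ball around `i`, the locally constant transition functions `g j - g i`
define a covering space of `M` with discrete fibre; as `M` is simply connected, the identity of `M`
lifts to a global section `s`, and subtracting from `g x` the constant which `s x` encodes gives
primitives that agree on overlaps. -/
theorem exists_global {n : ℕ} {M : Set (Pt n)} (hM : IsOpen M) (hMsc : SimplyConnectedSpace M)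
    {ω : Pt n → Pt n →L[ℂ] ℂ}
    (hloc : ∀ x ∈ M, ∃ r > 0, Metric.ball x r ⊆ M ∧ ∃ f : Fn n,
      ∀ y ∈ Metric.ball x r, HasFDerivAt f (ω y) y) :
    ∃ f : Fn n, ∀ x ∈ M, HasFDerivAt f (ω x) x := by
  classical
  choose! r hr hsub g hg using hloc
  -- Differences of local primitives are constant on intersections of balls, which are convex.
  have hconst : ∀ x ∈ M, ∀ y ∈ M, ∀ z ∈ Metric.ball x (r x) ∩ Metric.ball y (r y),
      ∀ w ∈ Metric.ball x (r x) ∩ Metric.ball y (r y), g y z - g x z = g y w - g x w := by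
    intro x hx y hy z hz w hw
    have hd : ∀ u ∈ Metric.ball x (r x) ∩ Metric.ball y (r y),
        HasFDerivAt (fun u => g y u - g x u) 0 u := fun u hu => by
      simpa using (hg y hy u hu.2).fun_sub (hg x hx u hu.1)
    exact (Metric.isOpen_ball.inter Metric.isOpen_ball).is_const_of_fderiv_eq_zero (𝕜 := ℂ)
      (((convex_ball x (r x)).inter (convex_ball y (r y))).isPreconnected)
      (fun u hu => (hd u hu).differentiableAt.differentiableWithinAt)
      (fun u hu => (hd u hu).fderiv) hz hw
  let U : M → Set M := fun i => Subtype.val ⁻¹' Metric.ball (i : Pt n) (r i)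
  let Z : FiberBundleCore M M DiscC :=
    { baseSet := U
      isOpen_baseSet := fun i => Metric.isOpen_ball.preimage continuous_subtype_val
      indexAt := id
      mem_baseSet_at := fun x => Metric.mem_ball_self (hr x x.2)
      coordChange := fun i j x v => DiscC.toC.symm (DiscC.toC v + (g j x - g i x))
      coordChange_self := fun i x _ v => by simp
      continuousOn_coordChange := fun i j => by
        rintro ⟨x, v⟩ ⟨hx, -⟩
        have hopen : IsOpen ((U i ∩ U j) ×ˢ ({v} : Set DiscC)) :=
          ((Metric.isOpen_ball.preimage continuous_subtype_val).inter
            (Metric.isOpen_ball.preimage continuous_subtype_val)).prod (isOpen_discrete _)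
        refine ContinuousAt.continuousWithinAt ?_
        refine (continuousAt_const
          (y := DiscC.toC.symm (DiscC.toC v + (g j x - g i x)))).congr ?_
        filter_upwards [hopen.mem_nhds ⟨hx, rfl⟩]
        rintro ⟨y, w⟩ ⟨hy, hw⟩
        obtain rfl : w = v := hw
        simp only [hconst i i.2 j j.2 x hx y hy]
      coordChange_comp := fun i j k x _ v => by
        simp only [Equiv.apply_symm_apply]
        congr 1
        ring }
  have cov : IsCoveringMap Z.proj :=
    IsFiberBundle.isCoveringMap (F := DiscC) fun x => ⟨Z.localTrivAt x, Z.mem_baseSet_at x⟩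
  have := hM.locallyPathConnectedSpace
  obtain ⟨x₀⟩ : Nonempty M := inferInstance
  obtain ⟨s, ⟨-, hs⟩, -⟩ := cov.existsUnique_continuousMap_lifts (ContinuousMap.id M) x₀
    ⟨x₀, DiscC.toC.symm 0⟩ rfl
  let v : M → ℂ := fun x => DiscC.toC (s x).2
  have hsx : ∀ x, (s x).1 = x := fun x => congrFun hs x
  refine ⟨fun x => if hx : x ∈ M then g x x - v ⟨x, hx⟩ else 0, fun x hx => ?_⟩
  let i : M := ⟨x, hx⟩
  -- The section `s`, read in the trivialization over the ball of `x`, is locally constant.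
  let c : M → DiscC := fun y => (Z.localTrivAt i (s y)).2
  have hc : ∀ y, DiscC.toC (c y) = v y + (g x y - g y y) := fun y => by
    have : DiscC.toC (c y) = v y + (g x (s y).1 - g (s y).1 (s y).1) := rfl
    rw [this, hsx]
  have hcc : ContinuousAt c i := by
    have h1 : ContinuousAt (Z.localTrivAt i) (s i) := by
      refine (Z.localTrivAt i).continuousAt ?_
      rw [FiberBundleCore.mem_localTrivAt_source, hsx]
      exact Z.mem_baseSet_at i
    exact (h1.comp s.continuous.continuousAt).snd
  have hev : ∀ᶠ y in 𝓝 i, c y = c i :=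
    hcc (by rw [nhds_discrete]; exact Set.mem_singleton _)
  have hev' : ∀ᶠ y in 𝓝 x, ∃ hy : y ∈ M, c ⟨y, hy⟩ = c i := by
    rw [nhds_subtype_eq_comap, Filter.eventually_comap] at hev
    filter_upwards [hev, hM.mem_nhds hx] with y h1 h2
    exact ⟨h2, h1 ⟨y, h2⟩ rfl⟩
  refine ((hg x hx x (Metric.mem_ball_self (hr x hx))).sub_const (v i)).congr_of_eventuallyEq ?_
  filter_upwards [hev'] with y ⟨hy, h⟩
  rw [dif_pos hy]
  have h2 := congrArg DiscC.toC h
  rw [hc, hc] at h2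
  linear_combination -h2

/-! ### Calculus of `pd` and primitives of closed forms -/

theorem fderiv_apply_eq_sum_pd {n : ℕ} (f : Fn n) (x v : Pt n) :
    fderiv ℂ f x v = ∑ i, v i * pd i f x := by
  conv_lhs => rw [pi_eq_sum_univ' v]
  simp [pd, map_sum]

theorem AnalyticOnNhd.pd {n : ℕ} {M : Set (Pt n)} {f : Fn n} (hf : AnalyticOnNhd ℂ f M)
    (i : Fin n) : AnalyticOnNhd ℂ (pd i f) M := fun x hx =>
  ((ContinuousLinearMap.apply ℂ ℂ (Pi.single i 1 : Pt n)).analyticAt _).comp (hf.fderiv x hx)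

theorem pd_comm {n : ℕ} {f : Fn n} {x : Pt n} (hf : AnalyticAt ℂ f x) (i j : Fin n) :
    pd i (pd j f) x = pd j (pd i f) x := by
  have key : ∀ i j : Fin n, pd i (pd j f) x
      = fderiv ℂ (fderiv ℂ f) x (Pi.single i 1) (Pi.single j 1) := fun i j => by
    unfold pd
    rw [fderiv_clm_apply hf.fderiv.differentiableAt (differentiableAt_const _)]
    simp
  rw [key, key]
  exact (hf.contDiffAt (n := ⊤)).isSymmSndFDerivAt (by simp) _ _

theorem pd_congr {n : ℕ} {M : Set (Pt n)} (hM : IsOpen M) {f g : Fn n} (h : ∀ x ∈ M, f x = g x)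
    {x : Pt n} (hx : x ∈ M) (i : Fin n) : pd i f x = pd i g x := by
  have : f =ᶠ[𝓝 x] g := Filter.eventually_of_mem (hM.mem_nhds hx) h
  rw [pd, pd, this.fderiv_eq]

theorem pd_add {n : ℕ} {f g : Fn n} {x : Pt n} (hf : AnalyticAt ℂ f x) (hg : AnalyticAt ℂ g x)
    (i : Fin n) : pd i (fun y => f y + g y) x = pd i f x + pd i g x := by
  rw [pd, fderiv_fun_add hf.differentiableAt hg.differentiableAt]; rfl

theorem pd_sub {n : ℕ} {f g : Fn n} {x : Pt n} (hf : AnalyticAt ℂ f x) (hg : AnalyticAt ℂ g x)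
    (i : Fin n) : pd i (fun y => f y - g y) x = pd i f x - pd i g x := by
  rw [pd, fderiv_fun_sub hf.differentiableAt hg.differentiableAt]; rfl

theorem pd_mul {n : ℕ} {f g : Fn n} {x : Pt n} (hf : AnalyticAt ℂ f x) (hg : AnalyticAt ℂ g x)
    (i : Fin n) : pd i (fun y => f y * g y) x = pd i f x * g x + f x * pd i g x := by
  rw [pd, fderiv_fun_mul hf.differentiableAt hg.differentiableAt]
  simp [pd]; ring

theorem pd_const {n : ℕ} (c : ℂ) (x : Pt n) (i : Fin n) : pd i (fun _ => c) x = 0 := by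
  simp [pd]

theorem pd_coord {n : ℕ} (x : Pt n) (i j : Fin n) :
    pd i (fun y => y j) x = if j = i then 1 else 0 := by
  rw [pd, (hasFDerivAt_apply j x).fderiv]
  simp [Pi.single_apply]

theorem pd_sum {n : ℕ} {ι : Type*} {s : Finset ι} {f : ι → Fn n} {x : Pt n}
    (hf : ∀ k ∈ s, AnalyticAt ℂ (f k) x) (i : Fin n) :
    pd i (fun y => ∑ k ∈ s, f k y) x = ∑ k ∈ s, pd i (f k) x := by
  rw [pd, fderiv_fun_sum fun k hk => (hf k hk).differentiableAt]
  simp [pd]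

/-- A closed analytic form `∑ i, a i dt^i` on a simply connected domain has an analytic
primitive. -/
theorem exists_pd_primitive {n : ℕ} {M : Set (Pt n)} (hM : IsOpen M)
    (hMsc : SimplyConnectedSpace M) {a : Fin n → Fn n} (ha : ∀ i, AnalyticOnNhd ℂ (a i) M)
    (hsymm : ∀ x ∈ M, ∀ i j, pd i (a j) x = pd j (a i) x) :
    ∃ f : Fn n, AnalyticOnNhd ℂ f M ∧ ∀ x ∈ M, ∀ i, pd i f x = a i x := by
  let ω : Pt n → Pt n →L[ℂ] ℂ := fun x =>
    ∑ i, a i x • ContinuousLinearMap.proj (R := ℂ) (φ := fun _ : Fin n => ℂ) i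
  have hω : AnalyticOnNhd ℂ ω M := fun x hx =>
    Finset.analyticAt_fun_sum _ fun i _ => (ha i x hx).smul analyticAt_const
  have hfd : ∀ x ∈ M, ∀ u v, fderiv ℂ ω x u v = ∑ i, ∑ j, u j * v i * pd j (a i) x := by
    intro x hx u v
    have h1 : HasFDerivAt ω (∑ i, (fderiv ℂ (a i) x).smulRight
        (ContinuousLinearMap.proj (R := ℂ) (φ := fun _ : Fin n => ℂ) i)) x :=
      HasFDerivAt.fun_sum fun i _ =>
        HasFDerivAt.smul_const (ha i x hx).differentiableAt.hasFDerivAt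
          (ContinuousLinearMap.proj (R := ℂ) (φ := fun _ : Fin n => ℂ) i)
    rw [h1.fderiv]
    simp only [_root_.sum_apply, ContinuousLinearMap.smulRight_apply,
      _root_.smul_apply, ContinuousLinearMap.proj_apply, fderiv_apply_eq_sum_pd,
      smul_eq_mul, Finset.sum_mul]
    exact Finset.sum_congr rfl fun i _ => Finset.sum_congr rfl fun j _ => by ring
  have hωs : ∀ x ∈ M, ∀ u v, fderiv ℂ ω x u v = fderiv ℂ ω x v u := by
    intro x hx u v
    rw [hfd x hx, hfd x hx, Finset.sum_comm]
    exact Finset.sum_congr rfl fun i _ => Finset.sum_congr rfl fun j _ => by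
      rw [hsymm x hx]; ring
  obtain ⟨f, hf⟩ := exists_global hM hMsc fun x hx =>
    exists_local hM hω.differentiableOn hωs hx
  refine ⟨f, fun x hx => analyticAt_of_hasFDerivAt_analyticAt (hω x hx)
    (Filter.eventually_of_mem (hM.mem_nhds hx) hf), fun x hx i => ?_⟩
  rw [pd, (hf x hx).fderiv]
  simp [ω, Pi.single_apply]

theorem eq_of_pd_eq_zero {n : ℕ} {M : Set (Pt n)} (hM : IsOpen M) (hMc : IsPreconnected M)
    {f : Fn n} (hf : AnalyticOnNhd ℂ f M) (h : ∀ x ∈ M, ∀ i, pd i f x = 0) {x y : Pt n}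
    (hx : x ∈ M) (hy : y ∈ M) : f x = f y :=
  hM.is_const_of_fderiv_eq_zero (𝕜 := ℂ) hMc hf.differentiableOn (fun z hz => by
    ext v
    simp [fderiv_apply_eq_sum_pd, h z hz]) hx hy

/-! ### Matrix-valued functions and their partial derivatives -/

/-- The entrywise partial derivative `∂W/∂t^i` of a matrix-valued function. -/
def dM {n : ℕ} (i : Fin n) (W : Pt n → Matrix (Fin n) (Fin n) ℂ) (x : Pt n) :
    Matrix (Fin n) (Fin n) ℂ := Matrix.of fun α β => pd i (fun y => W y α β) x

/-- A matrix-valued function is analytic on `M` when all its entries are; stated entrywise, so that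
no norm on matrices has to be chosen. -/
def MatAn {n : ℕ} (M : Set (Pt n)) (W : Pt n → Matrix (Fin n) (Fin n) ℂ) : Prop :=
  ∀ α β, AnalyticOnNhd ℂ (fun x => W x α β) M

section
variable {n : ℕ} {M : Set (Pt n)} {V W : Pt n → Matrix (Fin n) (Fin n) ℂ}

theorem MatAn.const (A : Matrix (Fin n) (Fin n) ℂ) : MatAn M fun _ => A :=
  fun _ _ => analyticOnNhd_const

theorem MatAn.add (hV : MatAn M V) (hW : MatAn M W) : MatAn M fun x => V x + W x :=
  fun α β => (hV α β).add (hW α β)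

theorem MatAn.sub (hV : MatAn M V) (hW : MatAn M W) : MatAn M fun x => V x - W x :=
  fun α β => (hV α β).sub (hW α β)

theorem MatAn.mul (hV : MatAn M V) (hW : MatAn M W) : MatAn M fun x => V x * W x :=
  fun α β x hx => by
    simp only [Matrix.mul_apply]
    exact Finset.analyticAt_fun_sum _ fun μ _ => (hV α μ x hx).mul (hW μ β x hx)

theorem MatAn.smul (c : ℂ)
    (hV : MatAn M V) : MatAn M fun x => c • V x :=
  fun α β => analyticOnNhd_const.mul (hV α β)

theorem MatAn.sum {ι : Type*} {s : Finset ι} {V : ι → Pt n → Matrix (Fin n) (Fin n) ℂ}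
    (hV : ∀ k ∈ s, MatAn M (V k)) : MatAn M fun x => ∑ k ∈ s, V k x :=
  fun α β x hx => by
    simp only [Matrix.sum_apply]
    exact Finset.analyticAt_fun_sum _ fun k hk => hV k hk α β x hx

theorem MatAn.dM (hV : MatAn M V) (i : Fin n) : MatAn M (dM i V) := fun α β => (hV α β).pd i

theorem dM_add {x : Pt n} (hx : x ∈ M) (i : Fin n) (hV : MatAn M V) (hW : MatAn M W) :
    dM i (fun x => V x + W x) x = dM i V x + dM i W x := by
  ext α β
  exact pd_add (hV α β x hx) (hW α β x hx) i

theorem dM_sub {x : Pt n} (hx : x ∈ M) (i : Fin n) (hV : MatAn M V) (hW : MatAn M W) :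
    dM i (fun x => V x - W x) x = dM i V x - dM i W x := by
  ext α β
  exact pd_sub (hV α β x hx) (hW α β x hx) i

theorem dM_mul {x : Pt n} (hx : x ∈ M) (i : Fin n) (hV : MatAn M V) (hW : MatAn M W) :
    dM i (fun x => V x * W x) x = dM i V x * W x + V x * dM i W x := by
  ext α β
  simp only [dM, Matrix.of_apply, Matrix.mul_apply, Matrix.add_apply]
  rw [pd_sum (f := fun μ y => V y α μ * W y μ β)
    fun μ _ => (hV α μ x hx).mul (hW μ β x hx), ← Finset.sum_add_distrib]
  exact Finset.sum_congr rfl fun μ _ => pd_mul (hV α μ x hx) (hW μ β x hx) i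

theorem dM_const (x : Pt n) (i : Fin n) (A : Matrix (Fin n) (Fin n) ℂ) :
    dM i (fun _ => A) x = 0 := by
  ext α β
  exact pd_const _ x i

theorem dM_const_mul {x : Pt n} (hx : x ∈ M) (i : Fin n) (A : Matrix (Fin n) (Fin n) ℂ)
    (hV : MatAn M V) :
    dM i (fun x => A * V x) x = A * dM i V x := by
  rw [dM_mul hx i (MatAn.const A) hV, dM_const, zero_mul, zero_add]

theorem dM_mul_const {x : Pt n} (hx : x ∈ M) (i : Fin n) (A : Matrix (Fin n) (Fin n) ℂ)
    (hV : MatAn M V) :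
    dM i (fun x => V x * A) x = dM i V x * A := by
  rw [dM_mul hx i hV (MatAn.const A), dM_const, mul_zero, add_zero]

theorem dM_smul {x : Pt n} (hx : x ∈ M) (i : Fin n) (c : ℂ)
    (hV : MatAn M V) : dM i (fun x => c • V x) x = c • dM i V x := by
  ext α β
  refine (pd_mul (f := fun _ => c) analyticAt_const (hV α β x hx) i).trans ?_
  rw [pd_const]
  simp [dM]

theorem dM_sum {x : Pt n} (hx : x ∈ M) (i : Fin n) {ι : Type*} {s : Finset ι}
    {V : ι → Pt n → Matrix (Fin n) (Fin n) ℂ} (hV : ∀ k ∈ s, MatAn M (V k)) :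
    dM i (fun x => ∑ k ∈ s, V k x) x = ∑ k ∈ s, dM i (V k) x := by
  ext α β
  simp only [dM, Matrix.of_apply, Matrix.sum_apply]
  exact pd_sum (fun k hk => hV k hk α β x hx) i

end

/-! ### Recursive choice of sequences -/

/-- Course-of-values recursion for a relation: if `P k u` depends only on `u 0, …, u k`, and if
any `u` satisfying `P m u` for `m < k` can have its `k`-th value changed so as to satisfy `P k`, then
some sequence satisfies all `P k`. -/
theorem exists_seq_of_step {X : Type*} [Inhabited X] (P : ℕ → (ℕ → X) → Prop)
    (hcongr : ∀ k u v, (∀ m ≤ k, u m = v m) → P k u → P k v)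
    (hstep : ∀ k u, (∀ m < k, P m u) → ∃ x, P k (Function.update u k x)) :
    ∃ u, ∀ k, P k u := by
  have h' : ∀ k u, ∃ x, (∀ m < k, P m u) → P k (Function.update u k x) := fun k u => by
    by_cases h : ∀ m < k, P m u
    · exact (hstep k u h).imp fun x hx _ => hx
    · exact ⟨default, fun h2 => absurd h2 h⟩
  choose G hG using h'
  let u : ℕ → X := WellFounded.fix Nat.lt_wfRel.wf
    fun k rec => G k fun m => if h : m < k then rec m h else default
  have hu : ∀ k, u k = G k fun m => if m < k then u m else default := fun k => by
    have := WellFounded.fix_eq Nat.lt_wfRel.wf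
      (fun k (rec : ∀ m, m < k → X) => G k fun m => if h : m < k then rec m h else default) k
    refine this.trans ?_
    congr 1
  refine ⟨u, fun k => ?_⟩
  induction k using Nat.strong_induction_on with
  | _ k ih =>
    refine hcongr k _ u ?_ (hG k (fun m => if m < k then u m else default) fun m hm =>
      hcongr m u _ (fun l hl => (if_pos (lt_of_le_of_lt hl hm)).symm) (ih m hm))
    intro m hm
    rcases hm.lt_or_eq with h | rfl
    · rw [Function.update_of_ne h.ne, if_pos h]
    · rw [Function.update_self, ← hu]

/-! ### The Euler vector field -/

section
variable {n : ℕ} {M : Set (Pt n)} (q r : Fin n → ℂ)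

/-- The derivative of `f` along the Euler vector field `E^θ = (1 - q^θ) t^θ + r^θ`. -/
def eul (f : Fn n) : Fn n := fun x => ∑ θ, ((1 - q θ) * x θ + r θ) * pd θ f x

/-- The entrywise derivative of a matrix-valued function along the Euler vector field. -/
def eM (W : Pt n → Matrix (Fin n) (Fin n) ℂ) (x : Pt n) : Matrix (Fin n) (Fin n) ℂ :=
  Matrix.of fun α β => eul q r (fun y => W y α β) x

theorem analyticOnNhd_coeff (θ : Fin n) :
    AnalyticOnNhd ℂ (fun x : Pt n => (1 - q θ) * x θ + r θ) M := fun x _ =>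
  (analyticAt_const.mul ((ContinuousLinearMap.proj (R := ℂ) (φ := fun _ : Fin n => ℂ)
    θ).analyticAt x)).add analyticAt_const

variable {q r}

theorem AnalyticOnNhd.eul {f : Fn n} (hf : AnalyticOnNhd ℂ f M) :
    AnalyticOnNhd ℂ (eul q r f) M := fun x hx =>
  Finset.analyticAt_fun_sum _ fun θ _ => (analyticOnNhd_coeff q r θ x hx).mul (hf.pd θ x hx)

/-- `[∂_γ, E] = (1 - q^γ) ∂_γ`. -/
theorem pd_eul {f : Fn n} (hf : AnalyticOnNhd ℂ f M) {x : Pt n} (hx : x ∈ M) (γ : Fin n) :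
    pd γ (eul q r f) x = (1 - q γ) * pd γ f x + eul q r (pd γ f) x := by
  have hcoord : ∀ θ, AnalyticAt ℂ (fun y : Pt n => y θ) x := fun θ =>
    (ContinuousLinearMap.proj (R := ℂ) (φ := fun _ : Fin n => ℂ) θ).analyticAt x
  have h1 : ∀ θ, pd γ (fun y : Pt n => (1 - q θ) * y θ + r θ) x
      = if θ = γ then 1 - q θ else 0 := fun θ => by
    rw [pd_add (f := fun y => (1 - q θ) * y θ) (analyticAt_const.mul (hcoord θ)) analyticAt_const,
      pd_mul (f := fun _ => 1 - q θ) analyticAt_const (hcoord θ), pd_const, pd_const, pd_coord]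
    simp
  unfold eul
  rw [pd_sum (f := fun θ y => ((1 - q θ) * y θ + r θ) * pd θ f y)
    fun θ _ => (analyticOnNhd_coeff q r θ x hx).mul (hf.pd θ x hx)]
  simp only [pd_mul (analyticOnNhd_coeff q r _ x hx) (hf.pd _ x hx), h1,
    Finset.sum_add_distrib, ite_mul, zero_mul, Finset.sum_ite_eq', Finset.mem_univ, if_true]
  congr 1
  exact Finset.sum_congr rfl fun θ _ => by rw [pd_comm (hf x hx)]

theorem eul_congr (hM : IsOpen M) {f g : Fn n} (h : ∀ x ∈ M, f x = g x) {x : Pt n} (hx : x ∈ M) :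
    eul q r f x = eul q r g x :=
  Finset.sum_congr rfl fun θ _ => by rw [pd_congr hM h hx]

theorem eM_eq_sum (W : Pt n → Matrix (Fin n) (Fin n) ℂ) (x : Pt n) :
    eM q r W x = ∑ θ, ((1 - q θ) * x θ + r θ) • dM θ W x := by
  ext α β
  simp [eM, eul, dM, Matrix.sum_apply]

theorem eM_congr (hM : IsOpen M) {V W : Pt n → Matrix (Fin n) (Fin n) ℂ}
    (h : ∀ x ∈ M, V x = W x) {x : Pt n} (hx : x ∈ M) : eM q r V x = eM q r W x := by
  ext α β
  exact eul_congr hM (fun y hy => by rw [h y hy]) hx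

theorem MatAn.eM {V : Pt n → Matrix (Fin n) (Fin n) ℂ} (hV : MatAn M V) :
    MatAn M (eM q r V) := fun α β => (hV α β).eul

theorem dM_eM {V : Pt n → Matrix (Fin n) (Fin n) ℂ} (hV : MatAn M V) {x : Pt n} (hx : x ∈ M)
    (γ : Fin n) : dM γ (eM q r V) x = (1 - q γ) • dM γ V x + eM q r (dM γ V) x := by
  ext α β
  exact pd_eul (hV α β) hx γ

theorem eM_mul {V W : Pt n → Matrix (Fin n) (Fin n) ℂ} (hV : MatAn M V) (hW : MatAn M W)
    {x : Pt n} (hx : x ∈ M) :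
    eM q r (fun y => V y * W y) x = eM q r V x * W x + V x * eM q r W x := by
  simp only [eM_eq_sum, dM_mul hx _ hV hW, smul_add, Finset.sum_add_distrib, Finset.sum_mul,
    Finset.mul_sum, Matrix.smul_mul, Matrix.mul_smul]

open Matrix in
/-- The homogeneity `E C_γ = q^γ C_γ + [C_γ, Q]` of the matrices of structure constants
`C_γ = (c^α_{γβ})`, obtained by differentiating the conformality condition in `t^β` and `t^γ`. -/
theorem eM_structure (hM : IsOpen M) {F : Fin n → Fn n} (hF : ∀ α, AnalyticOnNhd ℂ (F α) M)
    (A : Matrix (Fin n) (Fin n) ℂ) (B : Fin n → ℂ)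
    (hconf : ∀ x ∈ M, ∀ α : Fin n,
      ∑ μ, ((1 - q μ) * x μ + r μ) * pd μ (F α) x =
        (2 - q α) * F α x + (∑ β, A α β * x β) + B α) {x : Pt n} (hx : x ∈ M) (γ : Fin n) :
    eM q r (fun y => of fun α β => pd γ (pd β (F α)) y) x =
      q γ • (of fun α β => pd γ (pd β (F α)) x)
        + ((of fun α β => pd γ (pd β (F α)) x) * diagonal q
            - diagonal q * (of fun α β => pd γ (pd β (F α)) x)) := by
  have h1 : ∀ α β, ∀ y ∈ M, eul q r (pd β (F α)) y = (1 + q β - q α) * pd β (F α) y + A α β := by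
    intro α β y hy
    have e1 := pd_eul (q := q) (r := r) (hF α) hy β
    have hcoord : ∀ θ, AnalyticAt ℂ (fun y : Pt n => y θ) y := fun θ =>
      (ContinuousLinearMap.proj (R := ℂ) (φ := fun _ : Fin n => ℂ) θ).analyticAt y
    have hlin : ∀ θ, AnalyticAt ℂ (fun y : Pt n => A α θ * y θ) y := fun θ =>
      analyticAt_const.mul (hcoord θ)
    have hsum : AnalyticAt ℂ (fun y : Pt n => ∑ θ, A α θ * y θ) y :=
      Finset.analyticAt_fun_sum _ fun θ _ => hlin θ
    have hFc : AnalyticAt ℂ (fun y => (2 - q α) * F α y) y := analyticAt_const.mul (hF α y hy)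
    rw [pd_congr hM (f := eul q r (F α)) (fun z hz => hconf z hz α) hy,
      pd_add (f := fun y => (2 - q α) * F α y + ∑ θ, A α θ * y θ) (hFc.add hsum) analyticAt_const,
      pd_const, pd_add (f := fun y => (2 - q α) * F α y) hFc hsum, pd_mul (f := fun _ => 2 - q α) analyticAt_const (hF α y hy), pd_const,
      pd_sum (f := fun θ y => A α θ * y θ) fun θ _ => hlin θ] at e1
    have e2 : ∑ θ, pd β (fun y => A α θ * y θ) y = A α β := by
      simp only [pd_mul (f := fun _ => A α _) analyticAt_const (hcoord _), pd_const, pd_coord]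
      simp
    rw [e2] at e1
    linear_combination -e1
  ext α β
  have e1 := pd_eul (q := q) (r := r) ((hF α).pd β) hx γ
  rw [pd_congr hM (h1 α β) hx,
    pd_add (f := fun y => (1 + q β - q α) * pd β (F α) y)
      (analyticAt_const.mul ((hF α).pd β x hx)) analyticAt_const, pd_const,
    pd_mul (f := fun _ => 1 + q β - q α) analyticAt_const ((hF α).pd β x hx), pd_const] at e1
  simp only [eM, of_apply, Matrix.add_apply, Matrix.sub_apply, Matrix.smul_apply,
      mul_diagonal, diagonal_mul, smul_eq_mul]
  linear_combination -e1

/-! ### The inductive step -/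

open Matrix in
/-- Given `W 0 = 1, …, W m` (where `W k` stands for `Ω^{k-1}_0`) and `R 1, …, R m`, there is a next
function `V` together with a next matrix `S = R (m + 1)`. A primitive `V₀` of the closed form
`W m * C_γ dt^γ` satisfies the homogeneity condition up to a constant matrix. Adding a constant `K`
to `V₀` changes the `(α, β)` entry of that matrix by `(q^α - q^β - (m + 1)) K^α_β`, so `K` can be
chosen to cancel all entries with `q^α - q^β ≠ m + 1`; the other entries make up `± S`. -/
theorem exists_next (hM : IsOpen M) (hMsc : SimplyConnectedSpace M) {x₀ : Pt n} (hx₀ : x₀ ∈ M)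
    {C : Fin n → Pt n → Matrix (Fin n) (Fin n) ℂ} (hC : ∀ γ, MatAn M (C γ))
    (hcomm : ∀ x ∈ M, ∀ γ δ, C γ x * C δ x = C δ x * C γ x)
    (hsymm : ∀ x ∈ M, ∀ γ δ, dM γ (C δ) x = dM δ (C γ) x)
    (hEC : ∀ x ∈ M, ∀ γ, eM q r (C γ) x
      = q γ • C γ x + (C γ x * diagonal q - diagonal q * C γ x))
    (m : ℕ) {W : ℕ → Pt n → Matrix (Fin n) (Fin n) ℂ} {R : ℕ → Matrix (Fin n) (Fin n) ℂ}
    (hW : ∀ k ≤ m, MatAn M (W k)) (hW0 : W 0 = fun _ => 1)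
    (hWd : ∀ k < m, ∀ x ∈ M, ∀ γ, dM γ (W (k + 1)) x = W k x * C γ x)
    (hWE : ∀ x ∈ M, eM q r (W m) x = (m : ℂ) • W m x
      + (W m x * diagonal q - diagonal q * W m x)
      + ∑ i ∈ Finset.Icc 1 m, (-1 : ℂ) ^ (i - 1) • (R i * W (m - i) x)) :
    ∃ (V : Pt n → Matrix (Fin n) (Fin n) ℂ) (S : Matrix (Fin n) (Fin n) ℂ), MatAn M V ∧
      (∀ x ∈ M, ∀ γ, dM γ V x = W m x * C γ x) ∧
      diagonal q * S - S * diagonal q = ((m + 1 : ℕ) : ℂ) • S ∧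
      ∀ x ∈ M, eM q r V x = ((m + 1 : ℕ) : ℂ) • V x
        + (V x * diagonal q - diagonal q * V x)
        + (∑ i ∈ Finset.Icc 1 m, (-1 : ℂ) ^ (i - 1) • (R i * W (m + 1 - i) x)
          + (-1 : ℂ) ^ m • S) := by
  have hWC : ∀ γ, MatAn M fun y => W m y * C γ y := fun γ => (hW m le_rfl).mul (hC γ)
  -- The form `W m * C γ dt^γ` is closed: `∂_γ C_δ` is symmetric in `γ, δ`, and `∂_γ (W m) * C_δ` is
  -- `W (m - 1) * C_γ * C_δ`, symmetric because the product is commutative.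
  have hclosed : ∀ x ∈ M, ∀ γ δ,
      dM γ (fun y => W m y * C δ y) x = dM δ (fun y => W m y * C γ y) x := by
    intro x hx γ δ
    rw [dM_mul hx _ (hW m le_rfl) (hC δ), dM_mul hx _ (hW m le_rfl) (hC γ), hsymm x hx]
    congr 1
    rcases m with _ | m
    · rw [hW0, dM_const, dM_const, zero_mul, zero_mul]
    · rw [hWd m (Nat.lt_succ_self m) x hx, hWd m (Nat.lt_succ_self m) x hx, mul_assoc, mul_assoc,
        hcomm x hx]
  have hprim : ∀ α β, ∃ f : Fn n, AnalyticOnNhd ℂ f M ∧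
      ∀ x ∈ M, ∀ γ, pd γ f x = (W m x * C γ x) α β := fun α β =>
    exists_pd_primitive hM hMsc (a := fun γ y => (W m y * C γ y) α β) (fun γ => hWC γ α β)
      fun x hx γ δ => congrFun (congrFun (hclosed x hx γ δ) α) β
  choose f hfan hfpd using hprim
  let V₀ : Pt n → Matrix (Fin n) (Fin n) ℂ := fun x => of fun α β => f α β x
  have hV₀ : MatAn M V₀ := hfan
  have hV₀d : ∀ x ∈ M, ∀ γ, dM γ V₀ x = W m x * C γ x := fun x hx γ => by
    ext α β
    exact hfpd α β x hx γ
  let T : Pt n → Matrix (Fin n) (Fin n) ℂ := fun x =>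
    ∑ i ∈ Finset.Icc 1 m, ((-1 : ℂ) ^ (i - 1) • R i) * W (m + 1 - i) x
  have hTi : ∀ i ∈ Finset.Icc 1 m, MatAn M fun x => ((-1 : ℂ) ^ (i - 1) • R i) * W (m + 1 - i) x :=
    fun i hi => (MatAn.const _).mul (hW _ (by have := (Finset.mem_Icc.1 hi).1; omega))
  have hT : MatAn M T := MatAn.sum hTi
  have hTd : ∀ x ∈ M, ∀ γ, dM γ T x =
      (∑ i ∈ Finset.Icc 1 m, (-1 : ℂ) ^ (i - 1) • (R i * W (m - i) x)) * C γ x := by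
    intro x hx γ
    rw [dM_sum hx γ hTi, Finset.sum_mul]
    refine Finset.sum_congr rfl fun i hi => ?_
    have hi' := Finset.mem_Icc.1 hi
    rw [dM_const_mul hx γ _ (hW _ (by omega)), show m + 1 - i = (m - i) + 1 by omega,
      hWd (m - i) (by omega) x hx, Matrix.smul_mul, Matrix.smul_mul, mul_assoc]
  -- The defect of `V₀` in the homogeneity condition, without the term of `R (m + 1)`.
  let D : Pt n → Matrix (Fin n) (Fin n) ℂ := fun x =>
    eM q r V₀ x - (((m + 1 : ℕ) : ℂ) • V₀ x + (V₀ x * diagonal q - diagonal q * V₀ x) + T x)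
  have a1 : MatAn M fun x => ((m + 1 : ℕ) : ℂ) • V₀ x := hV₀.smul _
  have a2 : MatAn M fun x => V₀ x * diagonal q := hV₀.mul (MatAn.const _)
  have a3 : MatAn M fun x => diagonal q * V₀ x := (MatAn.const _).mul hV₀
  have hD : MatAn M D := hV₀.eM.sub ((a1.add (a2.sub a3)).add hT)
  have hDd : ∀ x ∈ M, ∀ γ, dM γ D x = 0 := by
    intro x hx γ
    rw [dM_sub hx γ hV₀.eM ((a1.add (a2.sub a3)).add hT), dM_eM hV₀ hx,
      dM_add hx γ (a1.add (a2.sub a3)) hT, dM_add hx γ a1 (a2.sub a3), dM_sub hx γ a2 a3,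
      dM_smul hx γ _ hV₀, dM_mul_const hx γ _ hV₀, dM_const_mul hx γ _ hV₀, hTd x hx,
      eM_congr hM (fun y hy => hV₀d y hy γ) hx, eM_mul (hW m le_rfl) (hC γ) hx, hWE x hx,
      hEC x hx, hV₀d x hx]
    simp only [add_mul, sub_mul, mul_add, mul_sub, mul_assoc, Matrix.smul_mul, Matrix.mul_smul]
    push_cast
    module
  have hDc : ∀ x ∈ M, D x = D x₀ := fun x hx => by
    have hpc : IsPreconnected M := by
      have : PreconnectedSpace M := inferInstance
      exact isPreconnected_iff_preconnectedSpace.2 this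
    ext α β
    exact eq_of_pd_eq_zero hM hpc (hD α β)
      (fun y hy γ => congrFun (congrFun (hDd y hy γ) α) β) hx hx₀
  classical
  -- `K` and `S` split the constant `D` into its nonresonant and resonant entries.
  let K : Matrix (Fin n) (Fin n) ℂ := of fun α β =>
    if q α - q β = ((m + 1 : ℕ) : ℂ) then 0
    else D x₀ α β / (((m + 1 : ℕ) : ℂ) + q β - q α)
  let S : Matrix (Fin n) (Fin n) ℂ := of fun α β =>
    if q α - q β = ((m + 1 : ℕ) : ℂ) then (-1 : ℂ) ^ m * D x₀ α β else 0
  have hKS : D x₀ = ((m + 1 : ℕ) : ℂ) • K + (K * diagonal q - diagonal q * K)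
      + (-1 : ℂ) ^ m • S := by
    ext α β
    simp only [K, S, of_apply, Matrix.add_apply, Matrix.sub_apply, Matrix.smul_apply,
      mul_diagonal, diagonal_mul, smul_eq_mul]
    split_ifs with h
    · rw [← mul_assoc, ← mul_pow]
      simp
    · have : ((m + 1 : ℕ) : ℂ) + q β - q α ≠ 0 := fun h2 => h (by linear_combination -h2)
      field_simp
      ring
  have hVK : MatAn M fun x => V₀ x + K := hV₀.add (MatAn.const K)
  have hVKd : ∀ x ∈ M, ∀ γ, dM γ (fun x => V₀ x + K) x = dM γ V₀ x := fun x hx γ => by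
    rw [dM_add hx γ hV₀ (MatAn.const K), dM_const, add_zero]
  refine ⟨fun x => V₀ x + K, S, hVK, fun x hx γ => (hVKd x hx γ).trans (hV₀d x hx γ), ?_, ?_⟩
  · ext α β
    simp only [S, of_apply, Matrix.sub_apply, Matrix.smul_apply, mul_diagonal,
      diagonal_mul, smul_eq_mul]
    split_ifs with h
    · rw [← h]; ring
    · ring
  · intro x hx
    have h1 : eM q r (fun x => V₀ x + K) x = eM q r V₀ x := by
      simp only [eM_eq_sum, hVKd x hx]
    have h2 : eM q r V₀ x = D x₀ + (((m + 1 : ℕ) : ℂ) • V₀ x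
        + (V₀ x * diagonal q - diagonal q * V₀ x) + T x) := by
      rw [← hDc x hx]
      simp [D]
    have h3 : T x = ∑ i ∈ Finset.Icc 1 m, (-1 : ℂ) ^ (i - 1) • (R i * W (m + 1 - i) x) := by
      simp only [T, Matrix.smul_mul]
    rw [h1, h2, hKS, h3]
    simp only [add_mul, mul_add, smul_add]
    abel

end

end

/-! ### Existence of a calibration -/

theorem stmt1 (N : ℕ) (hN : 0 < N)
    (M : Set (Pt N)) (hM : IsOpen M) (x₀ : Pt N) (hx₀ : x₀ ∈ M)
    (hMsc : SimplyConnectedSpace ↥M)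
    -- vector potential of a flat F-manifold
    (F : Fin N → Fn N) (hFan : ∀ α, AnalyticOnNhd ℂ (F α) M)
    (hVP1 : ∀ x ∈ M, ∀ α β : Fin N,
      pd β (pd ⟨0, hN⟩ (F α)) x = if α = β then 1 else 0)
    (hVP2 : ∀ x ∈ M, ∀ α β γ δ' : Fin N,
      ∑ μ, pd β (pd μ (F α)) x * pd γ (pd δ' (F μ)) x =
      ∑ μ, pd γ (pd μ (F α)) x * pd β (pd δ' (F μ)) x)
    -- conformality
    (q r : Fin N → ℂ) (hq1 : q ⟨0, hN⟩ = 0)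
    (A : Matrix (Fin N) (Fin N) ℂ) (B : Fin N → ℂ)
    (hconf : ∀ x ∈ M, ∀ α : Fin N,
      ∑ μ, ((1 - q μ) * x μ + r μ) * pd μ (F α) x =
        (2 - q α) * F α x + (∑ β, A α β * x β) + B α) :
    ∃ (Ω : ℤ → Pt N → Matrix (Fin N) (Fin N) ℂ) (R : ℕ → Matrix (Fin N) (Fin N) ℂ),
      -- Ω is a calibration: analytic entries, Ω^{-1}_0 = Id and
      -- ∂Ω^{α,d}_{β,0}/∂t^γ = c^μ_{γβ} Ω^{α,d-1}_{μ,0} for d ≥ 0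
      (∀ (d : ℤ) (α β : Fin N), AnalyticOnNhd ℂ (fun x => Ω d x α β) M) ∧
      (∀ x, Ω (-1) x = 1) ∧
      (∀ (d : ℤ), 0 ≤ d → ∀ x ∈ M, ∀ α β γ : Fin N,
        pd γ (fun y => Ω d y α β) x =
          ∑ μ, pd γ (pd β (F μ)) x * Ω (d - 1) x α μ) ∧
      -- [Q, R_n] = n R_n for n ≥ 1
      (∀ n : ℕ, 1 ≤ n →
        Matrix.diagonal q * R n - R n * Matrix.diagonal q = (n : ℂ) • R n) ∧
      -- the conformal homogeneity condition
      (∀ (d : ℤ), -1 ≤ d → ∀ x ∈ M, ∀ α β : Fin N,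
        ∑ θ, ((1 - q θ) * x θ + r θ) * pd θ (fun y => Ω d y α β) x =
          ((d : ℂ) + 1) * Ω d x α β
            + (Ω d x * Matrix.diagonal q - Matrix.diagonal q * Ω d x) α β
            + ∑ i ∈ Finset.Icc 1 (d + 1).toNat,
                (-1 : ℂ) ^ (i - 1) * (R i * Ω (d - i) x) α β) := by
  let C : Fin N → Pt N → Matrix (Fin N) (Fin N) ℂ :=
    fun γ x => Matrix.of fun α β => pd γ (pd β (F α)) x
  have hC : ∀ γ, MatAn M (C γ) := fun γ α β => ((hFan α).pd β).pd γ
  have hcomm : ∀ x ∈ M, ∀ γ δ, C γ x * C δ x = C δ x * C γ x := fun x hx γ δ => by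
    ext α β
    exact hVP2 x hx α γ δ β
  have hsymm : ∀ x ∈ M, ∀ γ δ, dM γ (C δ) x = dM δ (C γ) x := fun x hx γ δ => by
    ext α β
    exact pd_comm ((hFan α).pd β x hx) γ δ
  have hEC : ∀ x ∈ M, ∀ γ, eM q r (C γ) x
      = q γ • C γ x + (C γ x * Matrix.diagonal q - Matrix.diagonal q * C γ x) := fun x hx γ =>
    eM_structure hM hFan A B hconf hx γ
  -- The pair `u k` consists of `Ω^{k-1}_0` and `R k`; the value `R 0` is irrelevant.
  let P : ℕ → (ℕ → (Pt N → Matrix (Fin N) (Fin N) ℂ) × Matrix (Fin N) (Fin N) ℂ) → Prop :=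
    fun k u => MatAn M (u k).1 ∧ (k = 0 → (u k).1 = fun _ => 1) ∧
      (∀ j, k = j + 1 → (∀ x ∈ M, ∀ γ, dM γ (u k).1 x = (u j).1 x * C γ x) ∧
        Matrix.diagonal q * (u k).2 - (u k).2 * Matrix.diagonal q = (k : ℂ) • (u k).2) ∧
      ∀ x ∈ M, eM q r (u k).1 x = (k : ℂ) • (u k).1 x
        + ((u k).1 x * Matrix.diagonal q - Matrix.diagonal q * (u k).1 x)
        + ∑ i ∈ Finset.Icc 1 k, (-1 : ℂ) ^ (i - 1) • ((u i).2 * (u (k - i)).1 x)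
  obtain ⟨u, hu⟩ : ∃ u, ∀ k, P k u := by
    refine exists_seq_of_step P ?_ ?_
    · rintro k u v huv ⟨h1, h2, h3, h4⟩
      refine ⟨huv k le_rfl ▸ h1, huv k le_rfl ▸ h2, fun j hj => ?_, fun x hx => ?_⟩
      · rw [← huv k le_rfl, ← huv j (by omega)]
        exact h3 j hj
      · rw [← huv k le_rfl, h4 x hx]
        congr 1
        refine Finset.sum_congr rfl fun i hi => ?_
        rw [huv i (Finset.mem_Icc.1 hi).2, huv (k - i) (Nat.sub_le _ _)]
    · intro k u hu
      rcases k with _ | m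
      · refine ⟨(fun _ => 1, 0), ?_⟩
        simp only [P, Function.update_self]
        refine ⟨MatAn.const 1, fun _ => trivial, fun j hj => by omega, fun x hx => ?_⟩
        simp [eM_eq_sum, dM_const]
      · obtain ⟨V, S, hV, hVd, hS, hVE⟩ := exists_next hM hMsc hx₀ hC hcomm hsymm hEC m
          (W := fun k => (u k).1) (R := fun k => (u k).2)
          (fun k hk => (hu k (by omega)).1) ((hu 0 (by omega)).2.1 rfl)
          (fun k hk => ((hu (k + 1) (by omega)).2.2.1 k rfl).1) ((hu m (by omega)).2.2.2)
        refine ⟨(V, S), ?_⟩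
        simp only [P, Function.update_self]
        refine ⟨hV, fun h => by omega, fun j hj => ?_, fun x hx => ?_⟩
        · obtain rfl : m = j := by omega
          rw [Function.update_of_ne (by omega)]
          exact ⟨hVd, hS⟩
        · rw [hVE x hx, Finset.sum_Icc_succ_top (by omega)]
          congr 2
          · refine Finset.sum_congr rfl fun i hi => ?_
            have := Finset.mem_Icc.1 hi
            rw [Function.update_of_ne (by omega), Function.update_of_ne (by omega)]
          · rw [Function.update_self, Nat.sub_self, Function.update_of_ne (by omega),
              (hu 0 (by omega)).2.1 rfl]
            simp
  -- `Int.toNat` makes `Ω^d_0` the identity for all `d < -1` as well, a range of no importance.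
  refine ⟨fun d => (u (d + 1).toNat).1, fun k => (u k).2, fun d => (hu _).1, fun x => ?_, ?_, ?_,
    ?_⟩
  · exact congrFun ((hu 0).2.1 rfl) x
  · intro d hd x hx α β γ
    obtain ⟨k, rfl⟩ := Int.eq_ofNat_of_zero_le hd
    have := congrFun (congrFun (((hu (k + 1)).2.2.1 k rfl).1 x hx γ) α) β
    have e1 : ((k : ℤ) + 1).toNat = k + 1 := by omega
    have e2 : ((k : ℤ) - 1 + 1).toNat = k := by omega
    simp only [e1, e2]
    refine this.trans ?_
    rw [Matrix.mul_apply]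
    exact Finset.sum_congr rfl fun μ _ => mul_comm _ _
  · intro n hn
    obtain ⟨j, rfl⟩ : ∃ j, n = j + 1 := ⟨n - 1, by omega⟩
    exact ((hu (j + 1)).2.2.1 j rfl).2
  · intro d hd x hx α β
    obtain ⟨k, hk⟩ := Int.eq_ofNat_of_zero_le (show 0 ≤ d + 1 by omega)
    obtain rfl : d = (k : ℤ) - 1 := by omega
    have h := congrFun (congrFun ((hu k).2.2.2 x hx) α) β
    have e1 : ((k : ℤ) - 1 + 1).toNat = k := by omega
    simp only [e1]
    refine Eq.trans h ?_
    simp only [Matrix.add_apply, Matrix.smul_apply, Matrix.sum_apply, smul_eq_mul]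
    congr 1
    · push_cast; ring
    · refine Finset.sum_congr rfl fun i hi => ?_
      have := Finset.mem_Icc.1 hi
      rw [show ((k : ℤ) - 1 - i + 1).toNat = k - i by omega]

end
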